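/- arXiv:2107.09449 — 2 statements merged into one kernel-verified Lean document; each statement's English description precedes it below -/
import Mathlib

section
/- If k = k₁ + k₂ with k₁, k₂ > 0, then every uniform k-palette (a,b,c) can be written as a coordinatewise sum (a,b,c) = (a₁,b₁,c₁) + (a₂,b₂,c₂) where (a₁,b₁,c₁) is a uniform k₁-palette and (a₂,b₂,c₂) is a uniform k₂-palette. -/
/-- A uniform k-palette: a + b + c = k with each entry at most ⌈k/2⌉. -/
def UniformPalette (k a b c : ℕ) : Prop :=
  a + b + c = k ∧ a ≤ (k + 1) / 2 ∧ b ≤ (k + 1) / 2 ∧ c ≤ (k + 1) / 2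

theorem pick_three (n l1 l2 l3 u1 u2 u3 : ℕ) (h1 : l1 ≤ u1) (h2 : l2 ≤ u2) (h3 : l3 ≤ u3)
    (hl : l1 + l2 + l3 ≤ n) (hu : n ≤ u1 + u2 + u3) :
    ∃ x y z : ℕ, x + y + z = n ∧ l1 ≤ x ∧ x ≤ u1 ∧ l2 ≤ y ∧ y ≤ u2 ∧ l3 ≤ z ∧ z ≤ u3 := by
  by_cases c1 : n ≤ u1 + l2 + l3
  · exact ⟨n - l2 - l3, l2, l3, by omega⟩
  by_cases c2 : n ≤ u1 + u2 + l3
  · exact ⟨u1, n - u1 - l3, l3, by omega⟩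
  · exact ⟨u1, u2, n - u1 - u2, by omega⟩

theorem stmt_4 (k k₁ k₂ : ℕ) (h : k = k₁ + k₂) (h₁ : 0 < k₁) (h₂ : 0 < k₂)
    (a b c : ℕ) (hp : UniformPalette k a b c) :
    ∃ a₁ b₁ c₁ a₂ b₂ c₂ : ℕ,
      UniformPalette k₁ a₁ b₁ c₁ ∧ UniformPalette k₂ a₂ b₂ c₂ ∧
      a = a₁ + a₂ ∧ b = b₁ + b₂ ∧ c = c₁ + c₂ := by
  obtain ⟨hs, ha, hb, hc⟩ := hp
  have e1 : k₁ ≤ 2 * ((k₁ + 1) / 2) ∧ 2 * ((k₁ + 1) / 2) ≤ k₁ + 1 := by omega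
  have e2 : k₂ ≤ 2 * ((k₂ + 1) / 2) ∧ 2 * ((k₂ + 1) / 2) ≤ k₂ + 1 := by omega
  have e : 2 * ((k + 1) / 2) ≤ k + 1 := by omega
  unfold UniformPalette
  generalize (k₁ + 1) / 2 = m at *
  generalize (k₂ + 1) / 2 = n at *
  generalize (k + 1) / 2 = p at *
  obtain ⟨e1, e1'⟩ := e1
  obtain ⟨e2, e2'⟩ := e2
  have hpm : p ≤ m + n := by omega
  have hp1 : p ≤ k₁ + n := by omega
  have hp2 : p ≤ k₂ + m := by omega
  have hl : (a - n) + (b - n) + (c - n) ≤ k₁ := by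
    clear hpm hp2 e1 e1' e
    rcases le_total a n with h1 | h1 <;> rcases le_total b n with h2 | h2 <;>
      rcases le_total c n with h3 | h3 <;> omega
  have hu : k₁ ≤ min a m + min b m + min c m := by
    clear hpm hp1 e2 e2' e hl
    rcases le_total a m with h1 | h1 <;> rcases le_total b m with h2 | h2 <;>
      rcases le_total c m with h3 | h3 <;> simp only [h1, h2, h3, min_eq_left, min_eq_right] <;>
      omega
  obtain ⟨x, y, z, hn, hx, hx', hy, hy', hz, hz'⟩ := pick_three k₁
    (a - n) (b - n) (c - n) (min a m) (min b m) (min c m)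
    (le_min (by omega) (by omega)) (le_min (by omega) (by omega)) (le_min (by omega) (by omega))
    hl hu
  rw [le_min_iff] at hx' hy' hz'
  clear hl hu
  obtain ⟨x1, x2⟩ := hx'
  obtain ⟨y1, y2⟩ := hy'
  obtain ⟨z1, z2⟩ := hz'
  rw [tsub_le_iff_right] at hx hy hz
  clear e1 e1' e2 e2' e hpm hp1 hp2 ha hb hc
  refine ⟨x, y, z, a - x, b - y, c - z, ⟨hn, x2, y2, z2⟩, ⟨?_, ?_, ?_, ?_⟩, ?_, ?_, ?_⟩ <;> omega
end

section
/- Let G be a connected graph with finite maximum degree Δ and minimum degree δ satisfying δ ≥ Δ/2, and G ≠ K₂. Then G admits an edge-coloring with 3 colors such that the only automorphism of G preserving the colors of all edges is the identity (i.e., D'(G) ≤ 3). -/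
namespace DI

open SimpleGraph

/-- A rooted spanning tree given by a parent function and a depth function. -/
structure RT {V : Type*} (G : SimpleGraph V) (r : V) (par : V → V) (dep : V → ℕ) : Prop where
  par_root : par r = r
  dep_root : dep r = 0
  adj : ∀ x, x ≠ r → G.Adj x (par x)
  dep_par : ∀ x, x ≠ r → dep x = dep (par x) + 1

/-- A rooted tree on a vertex subset. -/
structure PT {V : Type*} (G : SimpleGraph V) (r : V) (par : V → V) (dep : V → ℕ) (S : Set V) :
    Prop where
  mem : r ∈ S
  par_root : par r = r
  dep_root : dep r = 0
  adj : ∀ x ∈ S, x ≠ r → par x ∈ S ∧ G.Adj x (par x) ∧ dep x = dep (par x) + 1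

section
variable {V : Type*} {G : SimpleGraph V} {r : V} {par : V → V} {dep : V → ℕ}

lemma PT.insert {S : Set V} (h : PT G r par dep S) {a b : V} (ha : a ∈ S) (hb : b ∉ S)
    (hab : G.Adj b a) : ∃ par' dep', PT G r par' dep' (Insert.insert b S) ∧
      (∀ x ∈ S, dep' x = dep x) ∧ dep' b = dep a + 1 := by
  classical
  refine ⟨Function.update par b a, Function.update dep b (dep a + 1), ⟨?_, ?_, ?_, ?_⟩, ?_, ?_⟩
  · exact Or.inr h.mem
  · have : r ≠ b := fun e => hb (e ▸ h.mem)
    simp [this, h.par_root]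
  · have : r ≠ b := fun e => hb (e ▸ h.mem)
    simp [this, h.dep_root]
  · intro x hx hxr
    have hab' : a ≠ b := fun e => hb (e ▸ ha)
    rcases hx with rfl | hx
    · simp [ha, hab, hab']
    · have hxb : x ≠ b := fun e => hb (e ▸ hx)
      obtain ⟨h1, h2, h3⟩ := h.adj x hx hxr
      have hpb : par x ≠ b := fun e => hb (e ▸ h1)
      simp [hxb, hpb, h1, h2, h3]
  · intro x hx
    have hxb : x ≠ b := fun e => hb (e ▸ hx)
    simp [hxb]
  · simp

lemma PT.of_path {v : V} (p : G.Walk v r) (hp : p.IsPath) :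
    ∃ par dep, PT G r par dep {x | x ∈ p.support} ∧ dep v = p.length := by
  induction p with
  | nil => 
    exact ⟨id, fun _ => 0, ⟨by simp, rfl, rfl, by simp⟩, rfl⟩
  | cons h p ih =>
    rw [Walk.cons_isPath_iff] at hp
    obtain ⟨par, dep, h1, h2⟩ := ih hp.1
    obtain ⟨par', dep', h3, h4, h5⟩ := h1.insert (a := _) (b := _) (by simp) hp.2 h
    refine ⟨par', dep', ?_, ?_⟩
    · convert h3 using 1
      ext x; simp
    · rw [h5, h2]; simp

lemma PT.extend [Finite V] (hG : G.Connected) (n : ℕ) : ∀ (par : V → V) (dep : V → ℕ) (S : Set V),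
    PT G r par dep S → Sᶜ.ncard ≤ n → ∃ par' dep', RT G r par' dep' ∧ ∀ x ∈ S, dep' x = dep x := by
  induction n with
  | zero =>
    intro par dep S h hn
    have : Sᶜ = ∅ := by
      rw [← Set.ncard_eq_zero]; omega
    have hS : ∀ x, x ∈ S := fun x => by
      by_contra hx
      have : x ∈ Sᶜ := hx
      simp_all
    exact ⟨par, dep, ⟨h.par_root, h.dep_root, fun x hx => (h.adj x (hS x) hx).2.1,
      fun x hx => (h.adj x (hS x) hx).2.2⟩, fun _ _ => rfl⟩
  | succ n ih =>
    intro par dep S h hn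
    by_cases hS : ∃ b, b ∉ S
    · obtain ⟨b, hb⟩ := hS
      obtain ⟨w⟩ := hG.preconnected r b
      obtain ⟨d, -, hd1, hd2⟩ := w.exists_boundary_dart S h.mem hb
      obtain ⟨par', dep', h3, h4, h5⟩ := h.insert hd1 hd2 d.adj.symm
      obtain ⟨par'', dep'', h6, h7⟩ := ih par' dep' _ h3 (by
        have : (Insert.insert d.snd S)ᶜ.ncard < Sᶜ.ncard := by
          apply Set.ncard_lt_ncard _ (Set.toFinite _)
          constructor
          · intro x hx hx'
            exact hx (Or.inr hx')
          · intro hh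
            exact hh hd2 (Or.inl rfl)
        omega)
      exact ⟨par'', dep'', h6, fun x hx => by rw [h7 x (Or.inr hx), h4 x hx]⟩
    · push Not at hS
      exact ⟨par, dep, ⟨h.par_root, h.dep_root, fun x hx => (h.adj x (hS x) hx).2.1,
        fun x hx => (h.adj x (hS x) hx).2.2⟩, fun _ _ => rfl⟩

/-- `x` is a weak descendant of `v`. -/
def Sub (par : V → V) (v x : V) : Prop := ∃ k, par^[k] x = v

lemma Sub.refl (v : V) : Sub par v v := ⟨0, rfl⟩

lemma Sub.of_par {v x : V} (h : Sub par v (par x)) : Sub par v x := by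
  obtain ⟨k, hk⟩ := h
  exact ⟨k + 1, hk⟩

lemma Sub.par_of_ne {v x : V} (h : Sub par v x) (hne : x ≠ v) : Sub par v (par x) := by
  obtain ⟨k, hk⟩ := h
  cases k with
  | zero => exact absurd hk hne
  | succ k => exact ⟨k, hk⟩

lemma RT.iter_root (h : RT G r par dep) (k : ℕ) : par^[k] r = r := by
  induction k with
  | zero => rfl
  | succ k ih => rw [Function.iterate_succ_apply, h.par_root, ih]

lemma RT.not_sub_root (h : RT G r par dep) {v : V} (hv : v ≠ r) : ¬ Sub par v r := by
  rintro ⟨k, hk⟩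
  rw [h.iter_root] at hk
  exact hv hk.symm

lemma RT.dep_eq_zero (h : RT G r par dep) {x : V} : dep x = 0 ↔ x = r := by
  constructor
  · intro hx
    by_contra hne
    have := h.dep_par x hne
    omega
  · rintro rfl
    exact h.dep_root

lemma RT.dep_iter (h : RT G r par dep) (k : ℕ) : ∀ x, dep (par^[k] x) = dep x - k := by
  induction k with
  | zero => intro x; simp
  | succ k ih =>
    intro x
    rw [Function.iterate_succ_apply, ih]
    by_cases hx : x = r
    · subst hx
      rw [h.par_root, h.dep_root]; omega
    · have := h.dep_par x hx
      omega

lemma RT.sub_dep (h : RT G r par dep) {v x : V} (hs : Sub par v x) : dep v ≤ dep x := by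
  obtain ⟨k, rfl⟩ := hs
  rw [h.dep_iter]; omega

lemma RT.sub_root (h : RT G r par dep) (x : V) : Sub par r x := by
  refine ⟨dep x, ?_⟩
  apply h.dep_eq_zero.1
  rw [h.dep_iter]; omega

lemma RT.sub_eq (h : RT G r par dep) {u v x : V} (hu : Sub par u x) (hv : Sub par v x)
    (e : dep u = dep v) : u = v := by
  by_cases hu0 : dep u = 0
  · have h1 : u = r := h.dep_eq_zero.1 hu0
    have h2 : v = r := h.dep_eq_zero.1 (by omega)
    rw [h1, h2]
  obtain ⟨k, rfl⟩ := hu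
  obtain ⟨l, rfl⟩ := hv
  rw [h.dep_iter] at *
  rw [h.dep_iter] at e
  have : k = l := by omega
  rw [this]

/-- The path from a vertex to the root. -/
lemma RT.exists_path (h : RT G r par dep) (n : ℕ) : ∀ x, dep x = n → ∃ p : G.Walk x r, p.IsPath ∧
    p.length = dep x ∧ (∀ u, u ∈ p.support ↔ Sub par u x) ∧
    (∀ e ∈ p.edges, ∃ y, y ≠ r ∧ Sub par y x ∧ e = s(y, par y)) := by
  induction n with
  | zero =>
    intro x hx
    have := h.dep_eq_zero.1 hx
    subst this
    refine ⟨Walk.nil, by simp, by simp [hx], ?_, by simp⟩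
    intro u
    simp only [Walk.support_nil, List.mem_singleton]
    constructor
    · rintro rfl
      exact Sub.refl _
    · intro hu
      by_contra hc
      exact h.not_sub_root hc hu
  | succ n ih =>
    intro x hx
    have hxr : x ≠ r := fun e => by
      rw [e, h.dep_root] at hx; omega
    have hd := h.dep_par x hxr
    obtain ⟨p, h1, h2, h3, h4⟩ := ih (par x) (by omega)
    refine ⟨Walk.cons (h.adj x hxr) p, ?_, ?_, ?_, ?_⟩
    · rw [Walk.cons_isPath_iff]
      refine ⟨h1, fun hx' => ?_⟩
      have := h.sub_dep ((h3 _).1 hx')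
      omega
    · simp [h2, hd]
    · intro u
      rw [Walk.support_cons, List.mem_cons, h3]
      constructor
      · rintro (rfl | hu)
        · exact Sub.refl _
        · exact hu.of_par
      · intro hu
        by_cases hux : u = x
        · exact Or.inl hux
        · exact Or.inr (hu.par_of_ne (Ne.symm hux))
    · intro e he
      rw [Walk.edges_cons, List.mem_cons] at he
      rcases he with rfl | he
      · exact ⟨x, hxr, Sub.refl _, rfl⟩
      · obtain ⟨y, hy, hy2, rfl⟩ := h4 e he
        exact ⟨y, hy, hy2.of_par, rfl⟩

/-- Re-attach the subtree at `v` below `l`. -/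
lemma RT.move (h : RT G r par dep) {v l : V} (hadj : G.Adj v l) (hd : dep v ≤ dep l)
    (hs : ¬ Sub par v l) : ∃ par' dep', RT G r par' dep' ∧ (∀ x, dep x ≤ dep' x) ∧
      dep v < dep' v := by
  classical
  have hvr : v ≠ r := by
    rintro rfl
    exact hs (h.sub_root l)
  refine ⟨Function.update par v l,
    fun x => if Sub par v x then dep x + (dep l + 1 - dep v) else dep x, ⟨?_, ?_, ?_, ?_⟩, ?_, ?_⟩
  · simp [hvr.symm, h.par_root]
  · simp [h.not_sub_root hvr, h.dep_root]
  · intro x hx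
    by_cases hxv : x = v
    · subst hxv; simpa using hadj
    · simpa [hxv] using h.adj x hx
  · intro x hx
    by_cases hxv : x = v
    · subst hxv
      simp only [Function.update_self, hs, Sub.refl, if_true, if_false]
      omega
    · simp only [Function.update_of_ne hxv]
      have hh := h.dep_par x hx
      by_cases hsx : Sub par v x
      · rw [if_pos hsx, if_pos (hsx.par_of_ne hxv)]; omega
      · rw [if_neg hsx, if_neg (fun hc => hsx hc.of_par)]; omega
  · intro x
    dsimp only
    split_ifs <;> omega
  · simp only [Sub.refl, if_true]
    omega

/-- A normal rooted spanning tree whose height is the length of a longest path. -/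
lemma exists_normal [Fintype V] (hG : G.Connected) : ∃ (r t : V) (par : V → V) (dep : V → ℕ),
    RT G r par dep ∧ (∀ (u v : V) (p : G.Walk u v), p.IsPath → p.length ≤ dep t) ∧
    (∀ u v, G.Adj v u → dep v ≤ dep u → Sub par v u) := by
  classical
  obtain ⟨v₀⟩ := hG.nonempty
  let P : ℕ → Prop := fun n => ∃ (u v : V) (p : G.Walk u v), p.IsPath ∧ p.length = n
  have hP0 : P 0 := ⟨v₀, v₀, Walk.nil, by simp, rfl⟩
  have hPb : ∀ n, P n → n ≤ Fintype.card V := by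
    rintro n ⟨u, v, p, hp, rfl⟩
    exact hp.length_lt.le
  let L := Nat.findGreatest P (Fintype.card V)
  have hL : P L := Nat.findGreatest_spec (Nat.zero_le _) hP0
  have hmax : ∀ n, P n → n ≤ L := fun n hn => Nat.le_findGreatest (hPb n hn) hn
  obtain ⟨v, r, p, hp, hpl⟩ := hL
  obtain ⟨par₀, dep₀, h1, h2⟩ := PT.of_path p hp
  obtain ⟨par₁, dep₁, h3, h4⟩ := PT.extend hG _ _ _ _ h1 le_rfl
  let Q : ℕ → Prop := fun n => ∃ par dep, RT G r par dep ∧ (∃ t, L ≤ dep t) ∧ ∑ x, dep x = n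
  have hQ1 : Q (∑ x, dep₁ x) := ⟨par₁, dep₁, h3, ⟨v, by rw [h4 v (by simp), h2, hpl]⟩, rfl⟩
  have hdL : ∀ par dep, RT G r par dep → ∀ x, dep x ≤ L := by
    intro par dep h x
    obtain ⟨q, hq1, hq2, -⟩ := h.exists_path _ x rfl
    exact hmax _ ⟨_, _, q, hq1, hq2⟩
  have hQb : ∀ n, Q n → n ≤ Fintype.card V * L := by
    rintro n ⟨par, dep, h, -, rfl⟩
    calc ∑ x, dep x ≤ ∑ x : V, L := Finset.sum_le_sum fun x _ => hdL _ _ h x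
      _ = _ := by simp
  let M := Nat.findGreatest Q (Fintype.card V * L)
  have hM : Q M := Nat.findGreatest_spec (hQb _ hQ1) hQ1
  have hMmax : ∀ n, Q n → n ≤ M := fun n hn => Nat.le_findGreatest (hQb n hn) hn
  obtain ⟨par, dep, h, ⟨t, ht⟩, hs⟩ := hM
  refine ⟨r, t, par, dep, h, ?_, ?_⟩
  · intro a b q hq
    exact (hmax _ ⟨a, b, q, hq, rfl⟩).trans ht
  · intro a b hab hd
    by_contra hc
    obtain ⟨par', dep', h', hle, hlt⟩ := h.move hab hd hc
    have := hMmax _ ⟨par', dep', h', ⟨t, ht.trans (hle t)⟩, rfl⟩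
    have : ∑ x, dep x < ∑ x, dep' x :=
      Finset.sum_lt_sum (fun x _ => hle x) ⟨b, Finset.mem_univ _, hlt⟩
    omega

end

section
variable {V : Type*} {G : SimpleGraph V} {r : V} {par : V → V} {dep : V → ℕ}

/-- The tree as a graph. -/
def TG (r : V) (par : V → V) : SimpleGraph V := SimpleGraph.fromRel (fun u v => u ≠ r ∧ par u = v)

lemma RT.tg_par (h : RT G r par dep) {x : V} (hx : x ≠ r) : (TG r par).Adj x (par x) :=
  ⟨(h.adj x hx).ne, Or.inl ⟨hx, rfl⟩⟩

lemma RT.tg_le (h : RT G r par dep) {u v : V} (huv : (TG r par).Adj u v) : G.Adj u v := by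
  obtain ⟨-, ⟨h1, rfl⟩ | ⟨h1, rfl⟩⟩ := huv
  · exact h.adj _ h1
  · exact (h.adj _ h1).symm

lemma RT.tg_eq_par (h : RT G r par dep) {u v : V} (huv : (TG r par).Adj u v) (hd : dep v ≤ dep u) :
    v = par u := by
  obtain ⟨-, ⟨h1, rfl⟩ | ⟨h1, rfl⟩⟩ := huv
  · rfl
  · have := h.dep_par _ h1
    omega

lemma RT.acyclic (h : RT G r par dep) : (TG r par).IsAcyclic := by
  classical
  intro v c hc
  obtain ⟨u, hu, hmax⟩ := c.support.toFinset.exists_max_image dep ⟨v, by simp⟩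
  have hu' : u ∈ c.support := by simpa using hu
  have hc' : (c.rotate u hu').IsCycle := hc.rotate hu'
  have hm : ∀ x ∈ (c.rotate u hu').support, dep x ≤ dep u := by
    intro x hx
    apply hmax
    rw [Walk.mem_support_rotate_iff] at hx
    simpa using hx
  apply hc'.snd_ne_penultimate
  rw [h.tg_eq_par ((c.rotate u hu').adj_snd hc'.not_nil) (hm _ (Walk.getVert_mem_support _ _)),
    h.tg_eq_par ((c.rotate u hu').adj_penultimate hc'.not_nil).symm
      (hm _ (Walk.getVert_mem_support _ _))]

/-- `x` has no child. -/
def Leaf (r : V) (par : V → V) (x : V) : Prop := ∀ y, y ≠ r → par y ≠ x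

lemma RT.endpoint (h : RT G r par dep) {L : ℕ}
    (hlong : ∀ (u v : V) (p : G.Walk u v), p.IsPath → p.length ≤ L) {a b : V} (q : G.Walk a b)
    (hq : q.IsPath) (hl : q.length = L) (he : ∀ e ∈ q.edges, e ∈ (TG r par).edgeSet) (ha : a ≠ r) :
    Leaf r par a := by
  classical
  intro y hy hya
  have hin : ∀ z, G.Adj a z → z ∈ q.support := by
    intro z hz
    by_contra hc
    have := hlong _ _ (Walk.cons hz.symm q) (by rw [Walk.cons_isPath_iff]; exact ⟨hq, hc⟩)
    rw [Walk.length_cons] at this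
    omega
  have hq' : (q.transfer _ he).IsPath := hq.transfer he
  have h1 := h.acyclic.eq_snd_of_adj_start hq' (h.tg_par ha)
    (by rw [Walk.support_transfer]; exact hin _ (h.adj a ha))
  have hay : (TG r par).Adj a y := by
    have := (h.tg_par hy).symm
    rwa [hya] at this
  have h2 := h.acyclic.eq_snd_of_adj_start hq' hay
    (by rw [Walk.support_transfer]; exact hin _ (h.tg_le hay))
  have h3 : y = par a := h2.trans h1.symm
  have h4 := h.dep_par a ha
  have h5 := h.dep_par y hy
  rw [hya] at h5
  rw [← h3] at h4
  omega

/-- A bijection preserving a subtree and the root preserves depth and parents on the subtree. -/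
lemma RT.comm (h : RT G r par dep) (C : V → Prop) (hC : ∀ x, x ≠ r → C x → C (par x))
    (σ : V → V) (hinj : Function.Injective σ) (hr : σ r = r)
    (hσ : ∀ x, x ≠ r → C x → ∃ y, y ≠ r ∧ C y ∧ s(σ x, σ (par x)) = s(y, par y)) (n : ℕ) :
    ∀ x, dep x = n → C x → (x ≠ r → C (σ x)) ∧ dep (σ x) = dep x ∧ par (σ x) = σ (par x) := by
  induction n using Nat.strong_induction_on with
  | _ n ih =>
    intro x hx hCx
    by_cases hxr : x = r
    · subst hxr
      simp [hr, h.par_root]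
    have hd := h.dep_par x hxr
    obtain ⟨h1, h2, h3⟩ := ih (dep (par x)) (by omega) (par x) rfl (hC x hxr hCx)
    obtain ⟨y, hy, hCy, e⟩ := hσ x hxr hCx
    rw [Sym2.eq_iff] at e
    rcases e with ⟨e1, e2⟩ | ⟨e1, e2⟩
    · have hdy := h.dep_par y hy
      refine ⟨fun _ => e1 ▸ hCy, ?_, ?_⟩
      · rw [e1, hdy, ← e2, h2, hd]
      · rw [e1, e2]
    · exfalso
      rw [← e2, h3] at e1
      have e3 := hinj e1
      have : par x ≠ r := by
        intro e4
        rw [e4, h.par_root] at e3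
        exact hxr e3
      have := h.dep_par _ this
      rw [← e3] at this
      omega

/-- The coloring when the tree is a path. -/
lemma RT.traceable (h : RT G r par dep) (hinj : Function.Injective dep) {x₀ : V}
    (hx₀ : 2 ≤ dep x₀) :
    ∃ φ : Sym2 V → Fin 3,
      ∀ σ : G ≃g G, (∀ u v, G.Adj u v → φ s(σ u, σ v) = φ s(u, v)) → ∀ x, σ x = x := by
  classical
  let φ : Sym2 V → Fin 3 := fun e =>
    if ∃ y, y ≠ r ∧ par y = r ∧ e = s(y, par y) then 1
    else if ∃ y, y ≠ r ∧ e = s(y, par y) then 0 else 2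
  have φ1 : ∀ e, φ e = 1 ↔ ∃ y, y ≠ r ∧ par y = r ∧ e = s(y, par y) := by
    intro e
    dsimp only [φ]
    split_ifs with h1 h2
    · simpa using h1
    · simp only [h1, iff_false]; decide
    · simp only [h1, iff_false]; decide
  have φ2 : ∀ e, φ e ≠ 2 ↔ ∃ y, y ≠ r ∧ e = s(y, par y) := by
    intro e
    dsimp only [φ]
    split_ifs with h1 h2
    · obtain ⟨y, hy, -, he⟩ := h1
      exact iff_of_true (by decide) ⟨y, hy, he⟩
    · exact iff_of_true (by decide) h2
    · simp only [h2, iff_false]; decide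
  refine ⟨φ, fun σ hσ => ?_⟩
  obtain ⟨x₂, hx₂⟩ : ∃ x, dep x = 2 := ⟨par^[dep x₀ - 2] x₀, by rw [h.dep_iter]; omega⟩
  have hx2r : x₂ ≠ r := by
    rintro rfl
    rw [h.dep_root] at hx₂; omega
  obtain ⟨w, hw⟩ : ∃ w, w = par x₂ := ⟨_, rfl⟩
  have hdw : dep w = 1 := by
    have := h.dep_par x₂ hx2r
    rw [← hw] at this; omega
  have hwr : w ≠ r := by
    rintro e
    rw [e, h.dep_root] at hdw; omega
  have hpw : par w = r := by
    have := h.dep_par w hwr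
    exact h.dep_eq_zero.1 (by omega)
  have huniq : ∀ y, y ≠ r → par y = r → y = w := by
    intro y hy hyr
    apply hinj
    rw [h.dep_par y hy, hyr, h.dep_root, hdw]
  have hroot : σ r = r := by
    have h1 : φ s(σ w, σ r) = 1 := by
      rw [hσ w r (hpw ▸ h.adj w hwr), φ1]
      exact ⟨w, hwr, hpw, by rw [hpw]⟩
    rw [φ1] at h1
    obtain ⟨y, hy, hyr, e⟩ := h1
    rw [hyr, huniq y hy hyr, Sym2.eq_iff] at e
    rcases e with ⟨-, e⟩ | ⟨e1, e2⟩
    · exact e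
    · exfalso
      have hadj : G.Adj x₂ w := hw ▸ h.adj x₂ hx2r
      have h2 : φ s(σ x₂, σ w) ≠ 2 := by
        rw [hσ _ _ hadj, φ2]
        exact ⟨x₂, hx2r, by rw [hw]⟩
      have h3 : φ s(σ x₂, σ w) ≠ 1 := by
        rw [hσ _ _ hadj, Ne, φ1]
        rintro ⟨z, hz, hzr, e⟩
        rw [hzr, Sym2.eq_iff] at e
        rcases e with ⟨-, e⟩ | ⟨e, -⟩
        · exact hwr e
        · exact hx2r e
      rw [φ2] at h2
      obtain ⟨z, hz, e⟩ := h2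
      apply h3
      rw [φ1]
      refine ⟨z, hz, ?_, e⟩
      rw [e1, Sym2.eq_iff] at e
      rcases e with ⟨-, e⟩ | ⟨-, e⟩
      · exact e.symm
      · exact absurd e.symm hz
  intro x
  apply hinj
  exact (h.comm (fun _ => True) (fun _ _ _ => trivial) σ σ.injective hroot (by
    intro y hy _
    have : φ s(σ y, σ (par y)) ≠ 2 := by
      rw [hσ _ _ (h.adj y hy), φ2]
      exact ⟨y, hy, rfl⟩
    rw [φ2] at this
    obtain ⟨z, hz, e⟩ := this
    exact ⟨z, hz, trivial, e⟩) _ x rfl trivial).2.1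

end

section
variable {V : Type*} {G : SimpleGraph V} {r : V} {par : V → V} {dep : V → ℕ}

/-- If the tree is not a path, a longest path is not closed by an edge and its end has degree at
least two. -/
lemma RT.nontraceable [Fintype V] [DecidableRel G.Adj] (h : RT G r par dep) (hG : G.Connected)
    (hdeg : G.maxDegree ≤ 2 * G.minDegree) {t : V}
    (hlong : ∀ (u v : V) (p : G.Walk u v), p.IsPath → p.length ≤ dep t)
    (hinj : ¬ Function.Injective dep) :
    2 ≤ dep t ∧ ¬ G.Adj r t ∧ 2 ≤ G.degree t := by
  classical
  obtain ⟨q, hq1, hq2, hq3, -⟩ := h.exists_path _ t rfl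
  obtain ⟨b₀, hb₀⟩ : ∃ b, ¬ Sub par b t := by
    by_contra hc
    push Not at hc
    exact hinj fun u v e => h.sub_eq (hc u) (hc v) e
  obtain ⟨w⟩ := hG.preconnected t b₀
  obtain ⟨⟨⟨a, b⟩, hab⟩, -, ha, hb⟩ := w.exists_boundary_dart {x | Sub par x t} (Sub.refl _) hb₀
  simp only [Set.mem_setOf_eq] at ha hb
  simp only at hab
  have hbq : b ∉ q.support := fun hc => hb ((hq3 b).1 hc)
  have hat : a ≠ t := by
    rintro rfl
    have := hlong _ _ (Walk.cons hab.symm q) (by rw [Walk.cons_isPath_iff]; exact ⟨hq1, hbq⟩)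
    rw [Walk.length_cons] at this
    omega
  have har : a ≠ r := by
    rintro rfl
    have := hlong _ _ (Walk.cons hab.symm q.reverse) (by
      rw [Walk.cons_isPath_iff, Walk.support_reverse, List.mem_reverse]
      exact ⟨hq1.reverse, hbq⟩)
    rw [Walk.length_cons, Walk.length_reverse] at this
    omega
  obtain ⟨k, hk⟩ := ha
  cases k with
  | zero => exact absurd hk.symm hat
  | succ k =>
  rw [Function.iterate_succ_apply'] at hk
  set c := par^[k] t with hc
  have hct : Sub par c t := ⟨k, hc.symm⟩
  have hcr : c ≠ r := by
    intro e
    rw [e, h.par_root] at hk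
    exact har hk.symm
  have hdc := h.dep_par c hcr
  have hda := h.dep_par a har
  have hdct := h.sub_dep hct
  rw [hk] at hdc
  have hL : 2 ≤ dep t := by omega
  refine ⟨hL, ?_, ?_⟩
  · intro hrt
    have hcyc : (Walk.cons hrt q).IsCycle := by
      rw [Walk.isCycle_iff_isPath_tail_and_le_length]
      refine ⟨by simpa using hq1, ?_⟩
      rw [Walk.length_cons]; omega
    have haq : a ∈ (Walk.cons hrt q).support := by
      rw [Walk.support_cons]
      exact List.mem_cons_of_mem _ ((hq3 a).2 ⟨k + 1, by rw [Function.iterate_succ_apply', ← hc, hk]⟩)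
    have hcyc' := hcyc.rotate haq
    set z := (Walk.cons hrt q).rotate a haq with hz
    have hzl : z.length = dep t + 1 := by
      rw [hz, Walk.length_rotate, Walk.length_cons, hq2]
    have hbz : b ∉ z.support := by
      rw [hz, Walk.mem_support_rotate_iff, Walk.support_cons, List.mem_cons]
      rintro (e | e)
      · exact hbq (e ▸ q.end_mem_support)
      · exact hbq e
    have hbz' : b ∉ z.tail.support := fun hc => hbz (by
      have := z.support_tail_of_not_nil hcyc'.not_nil
      rw [this] at hc
      exact List.mem_of_mem_tail hc)
    have := hlong _ _ (Walk.cons hab.symm z.tail.reverse) (by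
      rw [Walk.cons_isPath_iff, Walk.support_reverse, List.mem_reverse]
      exact ⟨hcyc'.isPath_tail.reverse, hbz'⟩)
    have h2 := z.length_tail_add_one hcyc'.not_nil
    rw [Walk.length_cons, Walk.length_reverse] at this
    omega
  · by_contra hdt
    have h1 := G.minDegree_le_degree t
    have h2 := G.degree_le_maxDegree a
    have h3 : ({par a, c, b} : Finset V) ⊆ G.neighborFinset a := by
      intro x hx
      simp only [Finset.mem_insert, Finset.mem_singleton] at hx
      rw [mem_neighborFinset]
      rcases hx with rfl | rfl | rfl
      · exact h.adj a har
      · exact hk ▸ (h.adj _ hcr).symm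
      · exact hab
    have h4 : par a ≠ c := by
      intro e
      rw [e] at hda
      omega
    have h5 : b ≠ c := by
      rintro e
      exact hb (e ▸ hct)
    have h6 : b ≠ par a := by
      intro e
      apply hb
      rw [e]
      refine ⟨k + 2, ?_⟩
      rw [Function.iterate_succ_apply', Function.iterate_succ_apply', ← hc, hk]
    have h7 := Finset.card_le_card h3
    rw [Finset.card_insert_of_notMem (by simp [h4, h6.symm]),
      Finset.card_insert_of_notMem (by simp [h5.symm]), Finset.card_singleton,
      card_neighborFinset_eq_degree] at h7
    omega

open Classical in
/-- The children of a vertex. -/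
noncomputable def ch [Fintype V] (r : V) (par : V → V) (x : V) : Finset V :=
  Finset.univ.filter fun y => y ≠ r ∧ par y = x

lemma mem_ch [Fintype V] {x y : V} : y ∈ ch r par x ↔ y ≠ r ∧ par y = x := by
  simp [ch]

lemma exists_rank [Fintype V] (r : V) (par : V → V) : ∃ rk : V → ℕ, ∀ x,
    Set.InjOn rk (ch r par x) ∧ (∀ n, n < (ch r par x).card ↔ ∃ y ∈ ch r par x, rk y = n) := by
  classical
  refine ⟨fun y => if hy : y ≠ r then
    ((ch r par (par y)).equivFin ⟨y, mem_ch.2 ⟨hy, rfl⟩⟩ : ℕ) else 0, fun x => ?_⟩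
  have key : ∀ y (hy : y ∈ ch r par x), (if hy : y ≠ r then
    ((ch r par (par y)).equivFin ⟨y, mem_ch.2 ⟨hy, rfl⟩⟩ : ℕ) else 0) =
      ((ch r par x).equivFin ⟨y, hy⟩ : ℕ) := by
    intro y hy
    obtain ⟨h1, rfl⟩ := mem_ch.1 hy
    rw [dif_pos h1]
  constructor
  · intro y hy z hz e
    dsimp only at e
    rw [key y hy, key z hz] at e
    have := (ch r par x).equivFin.injective (Fin.ext e)
    simpa using this
  · intro n
    constructor
    · intro hn
      obtain ⟨⟨y, hy⟩, e⟩ := (ch r par x).equivFin.surjective ⟨n, hn⟩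
      refine ⟨y, hy, ?_⟩
      dsimp only; rw [key y hy, e]
    · rintro ⟨y, hy, rfl⟩
      dsimp only; rw [key y hy]
      exact Fin.isLt _

lemma RT.exists_idx [Fintype V] (h : RT G r par dep) (D : ℕ) : ∃ (idx : V → ZMod D) (rk : V → ℕ),
    (∀ x, Set.InjOn rk (ch r par x) ∧
      (∀ n, n < (ch r par x).card ↔ ∃ y ∈ ch r par x, rk y = n)) ∧
    ∀ x, ∀ y ∈ ch r par x, idx y = idx x + (rk y : ZMod D) := by
  obtain ⟨rk, hrk⟩ := exists_rank r par
  refine ⟨fun x => ∑ k ∈ Finset.range (dep x), (rk (par^[k] x) : ZMod D), rk, hrk, ?_⟩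
  intro x y hy
  obtain ⟨h1, rfl⟩ := mem_ch.1 hy
  dsimp only
  rw [h.dep_par y h1, Finset.sum_range_succ']
  simp only [Function.iterate_succ_apply, Function.iterate_zero, id]

lemma cast_inj {D a b : ℕ} (ha : a < D) (hb : b < D) (e : (a : ZMod D) = (b : ZMod D)) :
    a = b := by
  rw [ZMod.natCast_eq_natCast_iff', Nat.mod_eq_of_lt ha, Nat.mod_eq_of_lt hb] at e
  exact e

/-- Equal cyclic intervals have the same starting point. -/
lemma start_eq {D : ℕ} {a b : ZMod D} {m : ℕ} (h0 : 0 < m) (hm : m < D)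
    (hab : ∀ z, (∃ n < m, z = a + (n : ZMod D)) ↔ ∃ n < m, z = b + (n : ZMod D)) : a = b := by
  obtain ⟨k, hk, e⟩ := (hab a).1 ⟨0, h0, by simp⟩
  cases k with
  | zero => simpa using e
  | succ k =>
    exfalso
    obtain ⟨l, hl, e2⟩ := (hab (b + (k : ZMod D))).2 ⟨k, by omega, rfl⟩
    have e3 : ((l + 1 : ℕ) : ZMod D) = ((0 : ℕ) : ZMod D) := by
      push_cast at e ⊢
      have : a = a + (l : ZMod D) + 1 := by
        rw [← e2]
        conv_lhs => rw [e]
        ring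
      linear_combination -this
    have := cast_inj (by omega) (by omega) e3
    omega

lemma Leaf.eq_of_sub (h : RT G r par dep) {l u : V} (hl : Leaf r par l) (hlr : l ≠ r)
    (hs : Sub par l u) : u = l := by
  obtain ⟨k, hk⟩ := hs
  cases k with
  | zero => exact hk
  | succ k =>
    exfalso
    rw [Function.iterate_succ_apply'] at hk
    by_cases hr : par^[k] u = r
    · rw [hr, h.par_root] at hk
      exact hlr hk.symm
    · exact hl _ hr hk

lemma Leaf.nbr (h : RT G r par dep) (hnorm : ∀ u v, G.Adj v u → dep v ≤ dep u → Sub par v u)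
    {l u : V} (hl : Leaf r par l) (hlr : l ≠ r) (hadj : G.Adj l u) :
    ¬ Leaf r par u ∧ dep u ≤ dep (par l) ∧ (dep u = dep (par l) → u = par l) := by
  have hd : dep u ≤ dep l := by
    by_contra hc
    have := hl.eq_of_sub h hlr (hnorm u l hadj (by omega))
    exact hadj.ne this.symm
  have hs := hnorm l u hadj.symm hd
  have hs' := hs.par_of_ne hadj.ne
  refine ⟨fun hu => ?_, h.sub_dep hs', fun e => h.sub_eq hs' (Sub.refl _) e⟩
  by_cases hur : u = r
  · obtain ⟨k, hk⟩ := hs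
    have hdl := h.dep_par l hlr
    have hlr' : par^[dep l - 1] l ≠ r := by
      intro e
      have h1 := h.dep_iter (dep l - 1) l
      rw [e, h.dep_root] at h1
      omega
    apply hu _ hlr'
    have h2 := h.dep_par _ hlr'
    rw [h.dep_iter] at h2
    rw [hur]
    exact h.dep_eq_zero.1 (by omega)
  · exact hadj.ne (hu.eq_of_sub h hur hs)

end

section
variable {V : Type*} {G : SimpleGraph V} {r t : V} {par : V → V} {dep : V → ℕ}

/-- The leaves other than `t`. -/
def Lf (r : V) (par : V → V) (t : V) (x : V) : Prop := Leaf r par x ∧ x ≠ t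

lemma exists_X [Fintype V] [DecidableRel G.Adj] [DecidableEq V] (h : RT G r par dep)
    (hdeg : G.maxDegree ≤ 2 * G.minDegree) (idx : V → ZMod G.maxDegree) :
    ∃ X : V → Finset V, ∀ l, l ≠ r → (par l ∈ X l ↔ (idx l).val % 2 = 1) ∧
      ((X l).erase (par l)).card = (idx l).val / 2 ∧ X l ⊆ G.neighborFinset l := by
  have : ∀ l, ∃ Y : Finset V, l ≠ r → (par l ∈ Y ↔ (idx l).val % 2 = 1) ∧
      (Y.erase (par l)).card = (idx l).val / 2 ∧ Y ⊆ G.neighborFinset l := by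
    intro l
    by_cases hl : l = r
    · exact ⟨∅, fun hc => absurd hl hc⟩
    have h1 := G.degree_le_maxDegree l
    have h2 := G.minDegree_le_degree l
    have hp : par l ∈ G.neighborFinset l := by
      rw [mem_neighborFinset]; exact h.adj l hl
    have h3 : 0 < (G.neighborFinset l).card := Finset.card_pos.2 ⟨_, hp⟩
    have h3' := h3
    rw [card_neighborFinset_eq_degree] at h3
    have : NeZero G.maxDegree := ⟨by omega⟩
    have h4 := (idx l).val_lt
    have h5 := Finset.card_erase_of_mem hp
    rw [card_neighborFinset_eq_degree] at h5
    obtain ⟨Z, hZ, hZc⟩ := Finset.exists_subset_card_eq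
      (s := (G.neighborFinset l).erase (par l)) (n := (idx l).val / 2) (by omega)
    have hpZ : par l ∉ Z := fun hc => by simpa using hZ hc
    have hZ' : Z ⊆ G.neighborFinset l := hZ.trans (Finset.erase_subset _ _)
    by_cases ho : (idx l).val % 2 = 1
    · refine ⟨insert (par l) Z, fun _ => ⟨by simp [ho], ?_, ?_⟩⟩
      · rw [Finset.erase_insert hpZ, hZc]
      · exact Finset.insert_subset hp hZ'
    · refine ⟨Z, fun _ => ⟨by simp [ho, hpZ], ?_, hZ'⟩⟩
      rw [Finset.erase_eq_of_notMem hpZ, hZc]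
  choose X hX using this
  exact ⟨X, hX⟩

lemma exists_color [Fintype V] [DecidableRel G.Adj] (h : RT G r par dep)
    (hnorm : ∀ u v, G.Adj v u → dep v ≤ dep u → Sub par v u)
    (htr : t ≠ r) (ht : Leaf r par t) (hr : ¬ Leaf r par r) (hrt : ¬ G.Adj r t)
    (hdt : 2 ≤ G.degree t) (X : V → Finset V) :
    ∃ φ : Sym2 V → Fin 3,
      (∀ e, φ e = 0 ↔ ∃ y, y ≠ r ∧ ¬ Lf r par t y ∧ e = s(y, par y)) ∧
      (∀ l u, Lf r par t l → G.Adj l u → (φ s(l, u) = 1 ↔ u ∈ X l)) ∧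
      ¬ ((∃ u, G.Adj r u ∧ φ s(r, u) = 2) ↔ (∃ u, G.Adj t u ∧ φ s(t, u) = 2)) := by
  classical
  have hLr : ∀ l, Lf r par t l → l ≠ r := by
    rintro l ⟨hl, -⟩ rfl
    exact hr hl
  have hLn : ∀ l u, Lf r par t l → G.Adj l u → ¬ Leaf r par u := fun l u hl hu =>
    (hl.1.nbr h hnorm (hLr l hl) hu).1
  let A : Prop := ∃ l, Lf r par t l ∧ G.Adj r l ∧ r ∉ X l
  let ct : Fin 3 := if A then 1 else 2
  let P0 : Sym2 V → Prop := fun e => ∃ y, y ≠ r ∧ ¬ Lf r par t y ∧ e = s(y, par y)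
  let P1 : Sym2 V → Prop := fun e => ∃ l, Lf r par t l ∧ l ∈ e
  let P2 : Sym2 V → Prop := fun e => ∃ l, Lf r par t l ∧ ∃ u ∈ X l, e = s(l, u)
  let φ : Sym2 V → Fin 3 := fun e =>
    if P0 e then 0 else if P1 e then (if P2 e then 1 else 2) else if t ∈ e then ct else 1
  have hct : ct ≠ 0 := by
    simp only [ct]; split_ifs <;> decide
  have F0 : ∀ e, φ e = 0 ↔ P0 e := by
    intro e
    simp only [φ]
    split_ifs <;> simp_all
  have N0 : ∀ l u, Lf r par t l → ¬ P0 s(l, u) := by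
    rintro l u hl ⟨y, hy, hyL, e⟩
    rw [Sym2.eq_iff] at e
    rcases e with ⟨rfl, -⟩ | ⟨e, -⟩
    · exact hyL hl
    · exact hl.1 y hy e.symm
  have F1 : ∀ l u, Lf r par t l → G.Adj l u → φ s(l, u) = if u ∈ X l then 1 else 2 := by
    intro l u hl hlu
    have h1 : P1 s(l, u) := ⟨l, hl, by simp⟩
    have h2 : P2 s(l, u) ↔ u ∈ X l := by
      constructor
      · rintro ⟨l', hl', u', hu', e⟩
        rw [Sym2.eq_iff] at e
        rcases e with ⟨rfl, rfl⟩ | ⟨rfl, rfl⟩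
        · exact hu'
        · exact absurd hl'.1 (hLn _ _ hl hlu)
      · intro hu
        exact ⟨l, hl, u, hu, rfl⟩
    simp only [φ, if_neg (N0 l u hl), if_pos h1, h2]
  refine ⟨φ, F0, ?_, ?_⟩
  · intro l u hl hlu
    rw [F1 l u hl hlu]
    split_ifs with hu <;> simp [hu]
  · have F2 : (∃ u, G.Adj r u ∧ φ s(r, u) = 2) ↔ A := by
      constructor
      · rintro ⟨u, hu, e⟩
        by_cases hL : Lf r par t u
        · refine ⟨u, hL, hu, ?_⟩
          rw [Sym2.eq_swap, F1 u r hL hu.symm] at e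
          intro hc
          rw [if_pos hc] at e
          exact absurd e (by decide)
        · exfalso
          have hnP1 : ¬ P1 s(r, u) := by
            rintro ⟨l, hl, hm⟩
            rw [Sym2.mem_iff] at hm
            rcases hm with rfl | rfl
            · exact hLr _ hl rfl
            · exact hL hl
          have hnt : t ∉ s(r, u) := by
            rw [Sym2.mem_iff]
            rintro (e | e)
            · exact htr e
            · exact hrt (e ▸ hu)
          simp only [φ, if_neg hnP1, if_neg hnt] at e
          split_ifs at e <;> exact absurd e (by decide)
      · rintro ⟨l, hl, hrl, hx⟩
        refine ⟨l, hrl, ?_⟩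
        rw [Sym2.eq_swap, F1 l r hl hrl.symm, if_neg hx]
    have Ft : ∀ u, G.Adj t u → u ≠ par t → φ s(t, u) = ct := by
      intro u hu hup
      have hul := (ht.nbr h hnorm htr hu).1
      have hnP0 : ¬ P0 s(t, u) := by
        rintro ⟨y, hy, hyL, e⟩
        rw [Sym2.eq_iff] at e
        rcases e with ⟨rfl, e⟩ | ⟨e, -⟩
        · exact hup e
        · exact ht y hy e.symm
      have hnP1 : ¬ P1 s(t, u) := by
        rintro ⟨l, hl, hm⟩
        rw [Sym2.mem_iff] at hm
        rcases hm with rfl | rfl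
        · exact hl.2 rfl
        · exact hul hl.1
      simp only [φ, if_neg hnP0, if_neg hnP1]
      rw [if_pos (by simp)]
    have F3 : (∃ u, G.Adj t u ∧ φ s(t, u) = 2) ↔ ¬ A := by
      constructor
      · rintro ⟨u, hu, e⟩ hA
        by_cases hup : u = par t
        · have : φ s(t, u) = 0 := (F0 _).2 ⟨t, htr, fun hc => hc.2 rfl, by rw [hup]⟩
          rw [this] at e
          exact absurd e (by decide)
        · rw [Ft u hu hup] at e
          simp only [ct, if_pos hA] at e
          exact absurd e (by decide)
      · intro hA
        have hc : 1 < (G.neighborFinset t).card := by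
          rw [card_neighborFinset_eq_degree]; omega
        obtain ⟨u, hu, hup⟩ := Finset.exists_mem_ne hc (par t)
        rw [mem_neighborFinset] at hu
        refine ⟨u, hu, ?_⟩
        rw [Ft u hu hup]
        simp only [ct, if_neg hA]
    rw [F2, F3]
    exact iff_not_self

/-- Colour preserving automorphisms fix `r` and `t`. -/
lemma fix_ends (h : RT G r par dep)
    (hlong : ∀ (u v : V) (p : G.Walk u v), p.IsPath → p.length ≤ dep t)
    (htr : t ≠ r) (ht : Leaf r par t) {φ : Sym2 V → Fin 3}
    (F0 : ∀ e, φ e = 0 ↔ ∃ y, y ≠ r ∧ ¬ Lf r par t y ∧ e = s(y, par y))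
    (F2 : ¬ ((∃ u, G.Adj r u ∧ φ s(r, u) = 2) ↔ (∃ u, G.Adj t u ∧ φ s(t, u) = 2)))
    (σ : G ≃g G) (hσ : ∀ u v, G.Adj u v → φ s(σ u, σ v) = φ s(u, v)) :
    σ r = r ∧ σ t = t := by
  classical
  obtain ⟨q, hq1, hq2, hq3, hq4⟩ := h.exists_path _ t rfl
  have Z : ∀ u v, φ s(u, v) = 0 → ¬ Lf r par t u := by
    intro u v e hu
    obtain ⟨y, hy, hyL, e⟩ := (F0 _).1 e
    rw [Sym2.eq_iff] at e
    rcases e with ⟨rfl, -⟩ | ⟨e, -⟩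
    · exact hyL hu
    · exact hu.1 y hy e.symm
  have hq0 : ∀ e ∈ q.edges, φ e = 0 := by
    intro e he
    obtain ⟨y, hy, hys, rfl⟩ := hq4 e he
    refine (F0 _).2 ⟨y, hy, ?_, rfl⟩
    rintro ⟨h1, h2⟩
    exact h2 (h1.eq_of_sub h hy hys).symm
  let q' := q.map σ.toHom
  have hq'1 : q'.IsPath := Walk.map_isPath_of_injective σ.injective hq1
  have hq'l : q'.length = dep t := by rw [Walk.length_map, hq2]
  have hq'0 : ∀ e ∈ q'.edges, φ e = 0 := by
    intro e he
    rw [Walk.edges_map, List.mem_map] at he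
    obtain ⟨e, he, rfl⟩ := he
    induction e with
    | _ u v =>
    have h1 := hq0 _ he
    have h2 := q.adj_of_mem_edges he
    rw [← hσ u v h2] at h1
    exact h1
  have hT : ∀ e, φ e = 0 → e ∈ (TG r par).edgeSet := by
    intro e he
    obtain ⟨y, hy, -, rfl⟩ := (F0 _).1 he
    exact h.tg_par hy
  have key : ∀ a b (p : G.Walk a b), p.IsPath → p.length = dep t → (∀ e ∈ p.edges, φ e = 0) →
      a = r ∨ a = t := by
    intro a b p hp hl h0
    by_contra hc
    push Not at hc
    have hle := h.endpoint hlong p hp hl (fun e he => hT e (h0 e he)) hc.1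
    cases p with
    | nil =>
      rw [Walk.length_nil] at hl
      exact htr (h.dep_eq_zero.1 hl.symm)
    | cons hadj p =>
      exact Z _ _ (h0 _ (by rw [Walk.edges_cons]; exact List.mem_cons_self)) ⟨hle, hc.2⟩
  have k1 : σ t = r ∨ σ t = t := key _ _ q' hq'1 hq'l hq'0
  have k2 : σ r = r ∨ σ r = t := by
    refine key _ _ q'.reverse hq'1.reverse (by rw [Walk.length_reverse, hq'l]) ?_
    intro e he
    rw [Walk.edges_reverse, List.mem_reverse] at he
    exact hq'0 e he
  have tr : ∀ x, (∃ u, G.Adj x u ∧ φ s(x, u) = 2) ↔ ∃ u, G.Adj (σ x) u ∧ φ s(σ x, u) = 2 := by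
    intro x
    constructor
    · rintro ⟨u, hu, e⟩
      exact ⟨σ u, σ.map_adj_iff.2 hu, by rw [hσ _ _ hu, e]⟩
    · rintro ⟨u, hu, e⟩
      obtain ⟨u, rfl⟩ := σ.surjective u
      rw [σ.map_adj_iff] at hu
      exact ⟨u, hu, by rw [← hσ _ _ hu, e]⟩
  have k3 : σ r ≠ t := by
    intro e
    apply F2
    rw [tr r, e]
  have k4 : σ r = r := k2.resolve_right k3
  refine ⟨k4, k1.resolve_left fun e => htr ?_⟩
  exact σ.injective (e.trans k4.symm)

end

section
variable {V : Type*} {G : SimpleGraph V} {r t : V} {par : V → V} {dep : V → ℕ}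

/-- On the core, colour preserving automorphisms preserve the tree. -/
lemma core_comm (h : RT G r par dep) (hr : ¬ Leaf r par r) {φ : Sym2 V → Fin 3}
    (F0 : ∀ e, φ e = 0 ↔ ∃ y, y ≠ r ∧ ¬ Lf r par t y ∧ e = s(y, par y))
    (σ : G ≃g G) (hσ : ∀ u v, G.Adj u v → φ s(σ u, σ v) = φ s(u, v)) (hσr : σ r = r) (x : V)
    (hx : ¬ Lf r par t x) :
    ¬ Lf r par t (σ x) ∧ dep (σ x) = dep x ∧ par (σ x) = σ (par x) := by
  have := h.comm (fun x => ¬ Lf r par t x) (fun x hx _ hc => hc.1 x hx rfl) σ σ.injective hσr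
    (by
      intro x hx hxL
      have h1 : φ s(x, par x) = 0 := (F0 _).2 ⟨x, hx, hxL, rfl⟩
      rw [← hσ _ _ (h.adj x hx)] at h1
      exact (F0 _).1 h1) _ x rfl hx
  refine ⟨?_, this.2⟩
  by_cases hxr : x = r
  · rw [hxr, hσr]; exact fun hc => hr hc.1
  · exact this.1 hxr

lemma symm_color {φ : Sym2 V → Fin 3} (σ : G ≃g G)
    (hσ : ∀ u v, G.Adj u v → φ s(σ u, σ v) = φ s(u, v)) :
    ∀ u v, G.Adj u v → φ s(σ.symm u, σ.symm v) = φ s(u, v) := by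
  intro u v huv
  have := hσ (σ.symm u) (σ.symm v) (σ.symm.map_adj_iff.2 huv)
  rw [← this]; simp

lemma rigid [Fintype V] [DecidableRel G.Adj] [DecidableEq V] (h : RT G r par dep)
    (hlong : ∀ (u v : V) (p : G.Walk u v), p.IsPath → p.length ≤ dep t)
    (hnorm : ∀ u v, G.Adj v u → dep v ≤ dep u → Sub par v u)
    (hr : ¬ Leaf r par r) {φ : Sym2 V → Fin 3}
    (idx : V → ZMod G.maxDegree) (rk : V → ℕ)
    (hrk : ∀ x, Set.InjOn rk (ch r par x) ∧
      (∀ n, n < (ch r par x).card ↔ ∃ y ∈ ch r par x, rk y = n))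
    (hidx : ∀ x, ∀ y ∈ ch r par x, idx y = idx x + (rk y : ZMod G.maxDegree))
    (X : V → Finset V)
    (hX : ∀ l, l ≠ r → (par l ∈ X l ↔ (idx l).val % 2 = 1) ∧
      ((X l).erase (par l)).card = (idx l).val / 2 ∧ X l ⊆ G.neighborFinset l)
    (F0 : ∀ e, φ e = 0 ↔ ∃ y, y ≠ r ∧ ¬ Lf r par t y ∧ e = s(y, par y))
    (F1 : ∀ l u, Lf r par t l → G.Adj l u → (φ s(l, u) = 1 ↔ u ∈ X l))
    (σ : G ≃g G) (hσ : ∀ u v, G.Adj u v → φ s(σ u, σ v) = φ s(u, v))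
    (hσr : σ r = r) (hσt : σ t = t) : ∀ x, σ x = x := by
  have hσr' : σ.symm r = r := by
    rw [RelIso.symm_apply_eq, hσr]
  have c1 := core_comm h hr F0 σ hσ hσr
  have c2 := core_comm h hr F0 σ.symm (symm_color σ hσ) hσr'
  have hL : ∀ x, Lf r par t x → Lf r par t (σ x) := by
    intro x hx
    by_contra hc
    have := (c2 _ hc).1
    rw [RelIso.symm_apply_apply] at this
    exact this hx
  have hLr : ∀ l, Lf r par t l → l ≠ r := by
    rintro l ⟨hl, -⟩ rfl
    exact hr hl
  have hne : ∀ x, x ≠ r → σ x ≠ r := fun x hx e => hx (σ.injective (e.trans hσr.symm))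
  -- the parent map commutes with σ
  have hparL : ∀ x, x ≠ r → ¬ Lf r par t (par x) := fun x hx hc => hc.1 x hx rfl
  have hpar : ∀ x, x ≠ r → par (σ x) = σ (par x) := by
    intro x hx
    by_cases hxL : Lf r par t x
    · have hxL' := hL x hxL
      have n1 := hxL'.1.nbr h hnorm (hne x hx) (σ.map_adj_iff.2 (h.adj x hx))
      have hadj : G.Adj x (σ.symm (par (σ x))) := by
        rw [← σ.map_adj_iff, RelIso.apply_symm_apply]
        exact h.adj _ (hne x hx)
      have n2 := hxL.1.nbr h hnorm hx hadj
      have d1 := (c1 _ (hparL x hx)).2.1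
      have d2 := (c2 _ (hparL _ (hne x hx))).2.1
      exact (n1.2.2 (by omega)).symm
    · exact (c1 x hxL).2.2
  have hidxL : ∀ x, Lf r par t x → idx (σ x) = idx x := by
    intro x hxL
    have hx := hLr x hxL
    have hxL' := hL x hxL
    have hX1 := hX x hx
    have hX2 := hX (σ x) (hne x hx)
    have hmem : ∀ u, u ∈ X x ↔ σ u ∈ X (σ x) := by
      intro u
      constructor
      · intro hu
        have ha : G.Adj x u := by
          have := hX1.2.2 hu
          rwa [mem_neighborFinset] at this
        rw [← F1 _ _ hxL' (σ.map_adj_iff.2 ha), hσ _ _ ha, F1 _ _ hxL ha]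
        exact hu
      · intro hu
        have ha : G.Adj x u := by
          have := hX2.2.2 hu
          rwa [mem_neighborFinset, σ.map_adj_iff] at this
        rwa [← F1 _ _ hxL' (σ.map_adj_iff.2 ha), hσ _ _ ha, F1 _ _ hxL ha] at hu
    have e1 : (idx (σ x)).val % 2 = 1 ↔ (idx x).val % 2 = 1 := by
      rw [← hX1.1, ← hX2.1, hmem, hpar x hx]
    have e2 : (idx (σ x)).val / 2 = (idx x).val / 2 := by
      rw [← hX1.2.1, ← hX2.2.1]
      symm
      apply Finset.card_bij (fun u _ => σ u)
      · intro u hu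
        rw [Finset.mem_erase] at hu ⊢
        rw [hpar x hx]
        exact ⟨fun e => hu.1 (σ.injective e), (hmem u).1 hu.2⟩
      · intro a _ b _ e
        exact σ.injective e
      · intro b hb
        obtain ⟨b, rfl⟩ := σ.surjective b
        rw [Finset.mem_erase, hpar x hx] at hb
        refine ⟨b, ?_, rfl⟩
        rw [Finset.mem_erase]
        exact ⟨fun e => hb.1 (by rw [e]), (hmem b).2 hb.2⟩
    have hpos : 0 < G.maxDegree := by
      have h1 := G.degree_le_maxDegree x
      have h2 : 0 < G.degree x := by
        rw [← card_neighborFinset_eq_degree]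
        refine Finset.card_pos.2 ⟨par x, ?_⟩
        rw [mem_neighborFinset]; exact h.adj x hx
      omega
    have : NeZero G.maxDegree := ⟨by omega⟩
    apply ZMod.val_injective
    omega
  have hchsub : ∀ x, ch r par x ⊆ G.neighborFinset x := by
    intro x y hy
    obtain ⟨h1, rfl⟩ := mem_ch.1 hy
    rw [mem_neighborFinset]
    exact (h.adj y h1).symm
  have hchle : ∀ x, (ch r par x).card ≤ G.maxDegree := by
    intro x
    have h1 := Finset.card_le_card (hchsub x)
    rw [card_neighborFinset_eq_degree] at h1
    exact h1.trans (G.degree_le_maxDegree x)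
  have hchlt : ∀ x, x ≠ r → (ch r par x).card < G.maxDegree := by
    intro x hx
    have hp : par x ∉ ch r par x := by
      intro hc
      obtain ⟨h1, h2⟩ := mem_ch.1 hc
      have h3 := h.dep_par _ h1
      have h4 := h.dep_par _ hx
      rw [h2] at h3
      omega
    have h0 : insert (par x) (ch r par x) ⊆ G.neighborFinset x := by
      refine Finset.insert_subset ?_ (hchsub x)
      rw [mem_neighborFinset]; exact h.adj x hx
    have h1 := Finset.card_le_card h0
    rw [card_neighborFinset_eq_degree, Finset.card_insert_of_notMem hp] at h1
    have h2 := G.degree_le_maxDegree x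
    omega
  have hch : ∀ x y, y ∈ ch r par x → σ y ∈ ch r par (σ x) := by
    intro x y hy
    obtain ⟨h1, rfl⟩ := mem_ch.1 hy
    exact mem_ch.2 ⟨hne y h1, hpar y h1⟩
  have hch' : ∀ x y, σ y ∈ ch r par (σ x) → y ∈ ch r par x := by
    intro x y hy
    obtain ⟨h1, h2⟩ := mem_ch.1 hy
    have hy : y ≠ r := by
      rintro rfl
      exact h1 hσr
    rw [hpar y hy] at h2
    exact mem_ch.2 ⟨hy, σ.injective h2⟩
  have hcard : ∀ x, (ch r par (σ x)).card = (ch r par x).card := by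
    intro x
    symm
    apply Finset.card_bij (fun u _ => σ u)
    · intro u hu
      exact hch x u hu
    · intro a _ b _ e
      exact σ.injective e
    · intro b hb
      obtain ⟨b, rfl⟩ := σ.surjective b
      exact ⟨b, hch' x b hb, rfl⟩
  have hInterval : ∀ x z, (∃ n < (ch r par x).card, z = idx x + (n : ZMod G.maxDegree)) ↔
      ∃ y ∈ ch r par x, idx y = z := by
    intro x z
    constructor
    · rintro ⟨n, hn, rfl⟩
      obtain ⟨y, hy, rfl⟩ := ((hrk x).2 n).1 hn
      exact ⟨y, hy, hidx x y hy⟩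
    · rintro ⟨y, hy, rfl⟩
      exact ⟨rk y, ((hrk x).2 _).2 ⟨y, hy, rfl⟩, hidx x y hy⟩
  have hle : ∀ x, dep x ≤ dep t := by
    intro x
    obtain ⟨p, hp, hl, -⟩ := h.exists_path _ x rfl
    have := hlong _ _ p hp
    omega
  have up : ∀ n x, x ≠ r → dep t < dep x + n → idx (σ x) = idx x := by
    intro n
    induction n with
    | zero =>
      intro x _ hx
      have := hle x
      omega
    | succ n ih =>
      intro x hx hn
      by_cases hxt : x = t
      · rw [hxt, hσt]
      by_cases hxl : Leaf r par x
      · exact hidxL x ⟨hxl, hxt⟩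
      have hchild : ∀ y ∈ ch r par x, idx (σ y) = idx y := by
        intro y hy
        obtain ⟨h1, h2⟩ := mem_ch.1 hy
        have h3 := h.dep_par y h1
        rw [h2] at h3
        exact ih y h1 (by omega)
      have hpos : 0 < (ch r par x).card := by
        simp only [Leaf, not_forall, not_not] at hxl
        obtain ⟨y, h1, h2⟩ := hxl
        exact Finset.card_pos.2 ⟨y, mem_ch.2 ⟨h1, h2⟩⟩
      refine start_eq hpos (hchlt x hx) fun z => ?_
      rw [hInterval x z, ← hcard x, hInterval (σ x) z]
      constructor
      · rintro ⟨y, hy, e⟩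
        obtain ⟨y, rfl⟩ := σ.surjective y
        have hy' := hch' x y hy
        exact ⟨y, hy', by rw [← hchild y hy', e]⟩
      · rintro ⟨y, hy, e⟩
        exact ⟨σ y, hch x y hy, by rw [hchild y hy, e]⟩
  have down : ∀ n x, dep x = n → σ x = x := by
    intro n
    induction n with
    | zero =>
      intro x hx
      rw [h.dep_eq_zero.1 hx, hσr]
    | succ n ih =>
      intro x hx
      have hxr : x ≠ r := by
        rintro rfl
        rw [h.dep_root] at hx
        omega
      have h1 := h.dep_par x hxr
      have hp : σ (par x) = par x := ih _ (by omega)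
      have m1 : x ∈ ch r par (par x) := mem_ch.2 ⟨hxr, rfl⟩
      have m2 : σ x ∈ ch r par (par x) := mem_ch.2 ⟨hne x hxr, by rw [hpar x hxr, hp]⟩
      have e := up (dep t + 1) x hxr (by omega)
      rw [hidx _ _ m1, hidx _ _ m2] at e
      have l1 := ((hrk (par x)).2 _).2 ⟨x, m1, rfl⟩
      have l2 := ((hrk (par x)).2 _).2 ⟨σ x, m2, rfl⟩
      have hD := hchle (par x)
      exact (hrk (par x)).1 m2 m1
        (cast_inj (by omega) (by omega) (add_left_cancel e))
  exact fun x => down _ x rfl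

lemma main_nontraceable [Fintype V] [DecidableRel G.Adj] (h : RT G r par dep) (hG : G.Connected)
    (hdeg : G.maxDegree ≤ 2 * G.minDegree)
    (hlong : ∀ (u v : V) (p : G.Walk u v), p.IsPath → p.length ≤ dep t)
    (hnorm : ∀ u v, G.Adj v u → dep v ≤ dep u → Sub par v u)
    (hinj : ¬ Function.Injective dep) :
    ∃ φ : Sym2 V → Fin 3,
      ∀ σ : G ≃g G, (∀ u v, G.Adj u v → φ s(σ u, σ v) = φ s(u, v)) → ∀ x, σ x = x := by
  classical
  obtain ⟨ht2, hrt, hdt⟩ := h.nontraceable hG hdeg hlong hinj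
  have htr : t ≠ r := by
    rintro rfl
    rw [h.dep_root] at ht2
    omega
  have ht : Leaf r par t := by
    intro y hy e
    have h1 := h.dep_par y hy
    rw [e] at h1
    obtain ⟨p, hp, hl, -⟩ := h.exists_path _ y rfl
    have := hlong _ _ p hp
    omega
  have hr : ¬ Leaf r par r := by
    intro hr
    have d := h.dep_iter (dep t - 1) t
    have hne : par^[dep t - 1] t ≠ r := by
      intro e
      rw [e, h.dep_root] at d
      omega
    apply hr _ hne
    have h2 := h.dep_par _ hne
    exact h.dep_eq_zero.1 (by omega)
  obtain ⟨idx, rk, hrk, hidx⟩ := h.exists_idx G.maxDegree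
  obtain ⟨X, hX⟩ := exists_X h hdeg idx
  obtain ⟨φ, F0, F1, F2⟩ := exists_color h hnorm htr ht hr hrt hdt X
  refine ⟨φ, fun σ hσ => ?_⟩
  obtain ⟨hσr, hσt⟩ := fix_ends h hlong htr ht F0 F2 σ hσ
  exact rigid h hlong hnorm hr idx rk hrk hidx X hX F0 F1 σ hσ hσr hσt

lemma main_small (h : RT G r par dep) (hinj : Function.Injective dep)
    (hs : ∀ x, dep x < 2) (hK2 : IsEmpty (G ≃g (⊤ : SimpleGraph (Fin 2)))) :
    ∃ φ : Sym2 V → Fin 3,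
      ∀ σ : G ≃g G, (∀ u v, G.Adj u v → φ s(σ u, σ v) = φ s(u, v)) → ∀ x, σ x = x := by
  classical
  by_cases hw : ∃ w, w ≠ r
  · exfalso
    obtain ⟨w, hw⟩ := hw
    have hdw : dep w = 1 := by
      have h1 := hs w
      have h2 : dep w ≠ 0 := fun e => hw (h.dep_eq_zero.1 e)
      omega
    have hpw : par w = r := by
      have := h.dep_par w hw
      exact h.dep_eq_zero.1 (by omega)
    have hadj : G.Adj w r := hpw ▸ h.adj w hw
    let f : V → Fin 2 := fun x => ⟨dep x, hs x⟩
    have hf : Function.Bijective f := by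
      constructor
      · intro a b e
        exact hinj (Fin.mk.inj_iff.1 e)
      · intro i
        fin_cases i
        · exact ⟨r, Fin.ext h.dep_root⟩
        · exact ⟨w, Fin.ext hdw⟩
    refine hK2.false ⟨Equiv.ofBijective f hf, ?_⟩
    intro a b
    rw [top_adj, Equiv.ofBijective_apply, Equiv.ofBijective_apply, hf.1.ne_iff]
    refine ⟨fun hab => ?_, fun hab => hab.ne⟩
    have cl : ∀ x, x = r ∨ x = w := by
      intro x
      by_cases hx : x = r
      · exact Or.inl hx
      · have h1 := hs x
        have h2 : dep x ≠ 0 := fun e => hx (h.dep_eq_zero.1 e)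
        exact Or.inr (hinj (by omega))
    rcases cl a with rfl | rfl <;> rcases cl b with rfl | rfl
    · exact absurd rfl hab
    · exact hadj.symm
    · exact hadj
    · exact absurd rfl hab
  · push Not at hw
    exact ⟨fun _ => 0, fun σ _ x => by rw [hw (σ x), hw x]⟩

end

end DI

theorem stmt_19 {V : Type*} [Fintype V] (G : SimpleGraph V) [DecidableRel G.Adj]
    (hconn : G.Connected) (hdeg : G.maxDegree ≤ 2 * G.minDegree)
    (hK2 : IsEmpty (G ≃g (⊤ : SimpleGraph (Fin 2)))) :
    ∃ φ : Sym2 V → Fin 3,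
      ∀ σ : G ≃g G, (∀ u v, G.Adj u v → φ s(σ u, σ v) = φ s(u, v)) → ∀ x, σ x = x := by
  obtain ⟨r, t, par, dep, h, hlong, hnorm⟩ := DI.exists_normal hconn
  by_cases hinj : Function.Injective dep
  · by_cases hx : ∃ x₀, 2 ≤ dep x₀
    · obtain ⟨x₀, hx₀⟩ := hx
      exact h.traceable hinj hx₀
    · push Not at hx
      exact DI.main_small h hinj hx hK2
  · exact DI.main_nontraceable h hconn hdeg hlong hnorm hinj
end
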